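/- Let ψ(x) = φ(|x|) be a radial density on ℝ²∖{0} and let γ be a closed ψ-minimal plane curve whose image avoids the origin. If ρ = min_u |γ(u)| > 0, then φ′(ρ) ≥ −1/ρ. Consequently, if ρ₀ > 0 and φ′(r) < −1/r for all r ≥ ρ₀, then there is no closed ψ-minimal curve whose image is contained in the region {x : |x| ≥ ρ₀}. -/

import Mathlib

noncomputable section
open Real Set

def dot2 (v w : ℝ × ℝ) : ℝ := v.1 * w.1 + v.2 * w.2

def nrm2 (v : ℝ × ℝ) : ℝ := Real.sqrt (v.1 ^ 2 + v.2 ^ 2)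

def Jrot (v : ℝ × ℝ) : ℝ × ℝ := (-v.2, v.1)

structure IsClosedCurve (γ : ℝ → ℝ × ℝ) : Prop where
  smooth : ContDiff ℝ (⊤ : ℕ∞) γ
  periodic : Function.Periodic γ (2 * π)
  regular : ∀ u, deriv γ u ≠ 0

def tangentC (γ : ℝ → ℝ × ℝ) (u : ℝ) : ℝ × ℝ := (nrm2 (deriv γ u))⁻¹ • deriv γ u

def normalC (γ : ℝ → ℝ × ℝ) (u : ℝ) : ℝ × ℝ := Jrot (tangentC γ u)

def arcDeriv {F : Type*} [NormedAddCommGroup F] [NormedSpace ℝ F]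
    (γ : ℝ → ℝ × ℝ) (h : ℝ → F) (u : ℝ) : F :=
  (nrm2 (deriv γ u))⁻¹ • deriv h u

def curvature (γ : ℝ → ℝ × ℝ) (u : ℝ) : ℝ :=
  dot2 (arcDeriv γ (tangentC γ) u) (normalC γ u)

def psiCurv (ψ : ℝ × ℝ → ℝ) (γ : ℝ → ℝ × ℝ) (u : ℝ) : ℝ :=
  curvature γ u - fderiv ℝ ψ (γ u) (normalC γ u)

def IsPsiMinimal (ψ : ℝ × ℝ → ℝ) (γ : ℝ → ℝ × ℝ) : Prop :=
  ∀ u, psiCurv ψ γ u = 0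

def signedArea (γ : ℝ → ℝ × ℝ) : ℝ :=
  (1/2) * ∫ u in (0:ℝ)..(2*π), ((γ u).1 * (deriv γ u).2 - (γ u).2 * (deriv γ u).1)

def turningNumber (γ : ℝ → ℝ × ℝ) : ℝ :=
  (1/(2*π)) * ∫ u in (0:ℝ)..(2*π), curvature γ u * nrm2 (deriv γ u)

def windingNumber (γ : ℝ → ℝ × ℝ) : ℝ :=
  (1/(2*π)) * ∫ u in (0:ℝ)..(2*π),
    ((γ u).1 * (deriv γ u).2 - (γ u).2 * (deriv γ u).1) / (nrm2 (γ u))^2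

def hess2 (ψ : ℝ × ℝ → ℝ) (x v : ℝ × ℝ) : ℝ :=
  fderiv ℝ (fun y => fderiv ℝ ψ y v) x v

def SmoothFamily (γ : ℝ → ℝ → ℝ × ℝ) : Prop :=
  ContDiff ℝ (⊤ : ℕ∞) fun p : ℝ × ℝ => γ p.1 p.2

/-!
At a point of the curve closest to the origin the position vector `γ` is orthogonal to the
velocity `γ'`, and the second derivative of `|γ|² / 2` is nonnegative: `0 ≤ |γ'|² + ⟨γ, γ''⟩`.
Since `γ` is then a multiple of the normal, the equation `k_ψ = 0` determines `⟨γ, γ''⟩`, which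
turns out to be `ρ φ'(ρ) |γ'|²`. Hence `0 ≤ (1 + ρ φ'(ρ)) |γ'|²`. On a closed curve a closest
point exists by compactness.
-/

open Filter Topology

lemma dot2_comm (v w : ℝ × ℝ) : dot2 v w = dot2 w v := by
  simp only [dot2]
  ring

lemma nrm2_sq (v : ℝ × ℝ) : nrm2 v ^ 2 = dot2 v v := by
  rw [nrm2, sq_sqrt (by positivity), dot2]
  ring

lemma nrm2_nonneg (v : ℝ × ℝ) : 0 ≤ nrm2 v := sqrt_nonneg _

lemma nrm2_pos {v : ℝ × ℝ} (hv : v ≠ 0) : 0 < nrm2 v := by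
  refine sqrt_pos.2 ((by positivity : 0 ≤ v.1 ^ 2 + v.2 ^ 2).lt_of_ne fun h ↦ hv ?_)
  ext <;> simp only [Prod.fst_zero, Prod.snd_zero] <;>
    nlinarith only [h, sq_nonneg v.1, sq_nonneg v.2]

lemma continuous_nrm2 : Continuous nrm2 := by
  unfold nrm2
  fun_prop

-- Expansion of `dot2 x w` in the orthogonal frame `v`, `Jrot v`.
lemma dot2_self_mul_dot2 (v x w : ℝ × ℝ) :
    dot2 v v * dot2 x w = dot2 x v * dot2 v w + dot2 x (Jrot v) * dot2 (Jrot v) w := by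
  simp only [dot2, Jrot]
  ring

lemma hasFDerivAt_nrm2 {p : ℝ × ℝ} (hp : p ≠ 0) :
    HasFDerivAt nrm2 ((nrm2 p)⁻¹ •
      (p.1 • ContinuousLinearMap.fst ℝ ℝ ℝ + p.2 • ContinuousLinearMap.snd ℝ ℝ ℝ)) p := by
  have hp' : p.1 ^ 2 + p.2 ^ 2 ≠ 0 := (sqrt_pos.1 (nrm2_pos hp)).ne'
  have hfst : HasFDerivAt Prod.fst (ContinuousLinearMap.fst ℝ ℝ ℝ) p := hasFDerivAt_fst
  have hsnd : HasFDerivAt Prod.snd (ContinuousLinearMap.snd ℝ ℝ ℝ) p := hasFDerivAt_snd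
  have hsqrt := ((hfst.pow 2).add (hsnd.pow 2)).sqrt hp'
  refine hsqrt.congr_fderiv (ContinuousLinearMap.ext fun v ↦ ?_)
  simp only [nrm2, Pi.add_apply, smul_apply, add_apply, ContinuousLinearMap.coe_fst',
    ContinuousLinearMap.coe_snd', smul_eq_mul, nsmul_eq_mul, Nat.add_one_sub_one, pow_one,
    Nat.cast_ofNat]
  field_simp

lemma fderiv_comp_nrm2 {φ : ℝ → ℝ} {p : ℝ × ℝ} (hp : p ≠ 0)
    (hφ : DifferentiableAt ℝ φ (nrm2 p)) (v : ℝ × ℝ) :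
    fderiv ℝ (fun x ↦ φ (nrm2 x)) p v = deriv φ (nrm2 p) * (dot2 p v / nrm2 p) := by
  have h : HasFDerivAt (fun x ↦ φ (nrm2 x)) _ p :=
    hφ.hasDerivAt.comp_hasFDerivAt p (hasFDerivAt_nrm2 hp)
  rw [h.fderiv]
  simp only [smul_apply, add_apply, ContinuousLinearMap.coe_fst', ContinuousLinearMap.coe_snd',
    smul_eq_mul, dot2]
  ring

lemma hasDerivAt_dot2 {f g : ℝ → ℝ × ℝ} {f' g' : ℝ × ℝ} {x : ℝ}
    (hf : HasDerivAt f f' x) (hg : HasDerivAt g g' x) :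
    HasDerivAt (fun y ↦ dot2 (f y) (g y)) (dot2 f' (g x) + dot2 (f x) g') x := by
  have hfst {h : ℝ → ℝ × ℝ} {h' : ℝ × ℝ} (hh : HasDerivAt h h' x) :
      HasDerivAt (fun y ↦ (h y).1) h'.1 x := hasFDerivAt_fst (p := h x) |>.comp_hasDerivAt x hh
  have hsnd {h : ℝ → ℝ × ℝ} {h' : ℝ × ℝ} (hh : HasDerivAt h h' x) :
      HasDerivAt (fun y ↦ (h y).2) h'.2 x := hasFDerivAt_snd (p := h x) |>.comp_hasDerivAt x hh
  refine (((hfst hf).mul (hfst hg)).add ((hsnd hf).mul (hsnd hg))).congr_deriv ?_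
  simp only [dot2]
  ring

lemma deriv_dot2_self {γ : ℝ → ℝ × ℝ} {u : ℝ} (hγ : DifferentiableAt ℝ γ u) :
    deriv (fun x ↦ dot2 (γ x) (γ x)) u = 2 * dot2 (γ u) (deriv γ u) := by
  rw [(hasDerivAt_dot2 hγ.hasDerivAt hγ.hasDerivAt).deriv, dot2_comm (deriv γ u)]
  ring

lemma deriv_deriv_nonneg_of_isLocalMin {f : ℝ → ℝ} {a : ℝ} (hmin : IsLocalMin f a)
    (hf : ContinuousAt f a) : 0 ≤ deriv (deriv f) a := by
  by_contra! hneg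
  have hmax : IsLocalMax f a := isLocalMax_of_deriv_deriv_neg hneg hmin.deriv_eq_zero hf
  have hconst : f =ᶠ[𝓝 a] fun _ ↦ f a := by
    filter_upwards [hmin, hmax] with x h₁ h₂ using le_antisymm h₂ h₁
  have hzero : deriv (deriv f) a = 0 := by simp [hconst.deriv.deriv_eq]
  exact hneg.ne hzero

lemma isLocalMin_dot2_self_of_isLocalMin_nrm2 {γ : ℝ → ℝ × ℝ} {u : ℝ}
    (hmin : IsLocalMin (fun x ↦ nrm2 (γ x)) u) : IsLocalMin (fun x ↦ dot2 (γ x) (γ x)) u := by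
  filter_upwards [hmin] with x hx
  simpa only [nrm2_sq] using pow_le_pow_left₀ (nrm2_nonneg (γ u)) hx 2

lemma dot2_deriv_eq_zero_of_isLocalMin_nrm2 {γ : ℝ → ℝ × ℝ} {u : ℝ}
    (hmin : IsLocalMin (fun x ↦ nrm2 (γ x)) u) (hγ : DifferentiableAt ℝ γ u) :
    dot2 (γ u) (deriv γ u) = 0 := by
  have h := (isLocalMin_dot2_self_of_isLocalMin_nrm2 hmin).deriv_eq_zero
  rw [deriv_dot2_self hγ] at h
  linarith

lemma dot2_deriv_self_add_nonneg_of_isLocalMin_nrm2 {γ : ℝ → ℝ × ℝ} {u : ℝ}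
    (hmin : IsLocalMin (fun x ↦ nrm2 (γ x)) u) (hγ : ∀ᶠ x in 𝓝 u, DifferentiableAt ℝ γ x)
    (hγ' : DifferentiableAt ℝ (deriv γ) u) :
    0 ≤ dot2 (deriv γ u) (deriv γ u) + dot2 (γ u) (deriv (deriv γ) u) := by
  have hderiv : deriv (fun x ↦ dot2 (γ x) (γ x)) =ᶠ[𝓝 u] fun x ↦ 2 * dot2 (γ x) (deriv γ x) := by
    filter_upwards [hγ] with x hx using deriv_dot2_self hx
  have hγu : HasDerivAt γ (deriv γ u) u := hγ.self_of_nhds.hasDerivAt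
  have hnonneg := deriv_deriv_nonneg_of_isLocalMin
    (isLocalMin_dot2_self_of_isLocalMin_nrm2 hmin) (hasDerivAt_dot2 hγu hγu).continuousAt
  rw [hderiv.deriv_eq, ((hasDerivAt_dot2 hγu hγ'.hasDerivAt).const_mul 2).deriv] at hnonneg
  linarith

lemma curvature_eq_div {γ : ℝ → ℝ × ℝ} {u : ℝ} (hreg : deriv γ u ≠ 0)
    (hγ' : DifferentiableAt ℝ (deriv γ) u) :
    curvature γ u = dot2 (Jrot (deriv γ u)) (deriv (deriv γ) u) / nrm2 (deriv γ u) ^ 3 := by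
  have hpos : 0 < nrm2 (deriv γ u) := nrm2_pos hreg
  have hspeed : DifferentiableAt ℝ (fun x ↦ (nrm2 (deriv γ x))⁻¹) u :=
    ((hasFDerivAt_nrm2 hreg).differentiableAt.comp u hγ').inv hpos.ne'
  have htangent : deriv (tangentC γ) u = (nrm2 (deriv γ u))⁻¹ • deriv (deriv γ) u +
      deriv (fun x ↦ (nrm2 (deriv γ x))⁻¹) u • deriv γ u :=
    (hspeed.hasDerivAt.smul hγ'.hasDerivAt).deriv
  simp only [curvature, arcDeriv, htangent, normalC, tangentC, dot2, Jrot, Prod.smul_fst,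
    Prod.smul_snd, Prod.fst_add, Prod.snd_add, smul_eq_mul]
  field_simp
  ring

lemma psiCurv_comp_nrm2 {φ : ℝ → ℝ} {γ : ℝ → ℝ × ℝ} {u : ℝ}
    (hφ : DifferentiableAt ℝ φ (nrm2 (γ u))) (hne : γ u ≠ 0) (hreg : deriv γ u ≠ 0)
    (hγ' : DifferentiableAt ℝ (deriv γ) u) :
    psiCurv (fun x ↦ φ (nrm2 x)) γ u =
      dot2 (Jrot (deriv γ u)) (deriv (deriv γ) u) / nrm2 (deriv γ u) ^ 3 -
        deriv φ (nrm2 (γ u)) * dot2 (γ u) (Jrot (deriv γ u)) /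
          (nrm2 (γ u) * nrm2 (deriv γ u)) := by
  rw [psiCurv, curvature_eq_div hreg hγ', fderiv_comp_nrm2 hne hφ]
  simp only [normalC, tangentC, dot2, Jrot, Prod.smul_fst, Prod.smul_snd, smul_eq_mul]
  field_simp

lemma dot2_deriv_deriv_of_psiCurv_eq_zero {φ : ℝ → ℝ} {γ : ℝ → ℝ × ℝ} {u : ℝ}
    (hφ : DifferentiableAt ℝ φ (nrm2 (γ u))) (hne : γ u ≠ 0) (hreg : deriv γ u ≠ 0)
    (hγ' : DifferentiableAt ℝ (deriv γ) u) (hψ : psiCurv (fun x ↦ φ (nrm2 x)) γ u = 0)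
    (horth : dot2 (γ u) (deriv γ u) = 0) :
    dot2 (γ u) (deriv (deriv γ) u) =
      nrm2 (γ u) * deriv φ (nrm2 (γ u)) * nrm2 (deriv γ u) ^ 2 := by
  have hγpos : 0 < nrm2 (γ u) := nrm2_pos hne
  have hspeed : 0 < nrm2 (deriv γ u) := nrm2_pos hreg
  have hnormal : dot2 (γ u) (Jrot (deriv γ u)) ^ 2 = nrm2 (deriv γ u) ^ 2 * nrm2 (γ u) ^ 2 := by
    rw [nrm2_sq, nrm2_sq, dot2_self_mul_dot2, horth, dot2_comm (Jrot _)]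
    ring
  have haccel : dot2 (Jrot (deriv γ u)) (deriv (deriv γ) u) =
      deriv φ (nrm2 (γ u)) / nrm2 (γ u) * nrm2 (deriv γ u) ^ 2 *
        dot2 (γ u) (Jrot (deriv γ u)) := by
    rw [psiCurv_comp_nrm2 hφ hne hreg hγ', sub_eq_zero] at hψ
    field_simp at hψ ⊢
    linear_combination hψ
  refine mul_left_cancel₀ (pow_pos hspeed 2).ne' ?_
  calc nrm2 (deriv γ u) ^ 2 * dot2 (γ u) (deriv (deriv γ) u)
      = dot2 (γ u) (Jrot (deriv γ u)) * dot2 (Jrot (deriv γ u)) (deriv (deriv γ) u) := by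
        rw [nrm2_sq, dot2_self_mul_dot2, horth, zero_mul, zero_add]
    _ = deriv φ (nrm2 (γ u)) / nrm2 (γ u) * nrm2 (deriv γ u) ^ 2 *
          dot2 (γ u) (Jrot (deriv γ u)) ^ 2 := by rw [haccel]; ring
    _ = nrm2 (deriv γ u) ^ 2 *
          (nrm2 (γ u) * deriv φ (nrm2 (γ u)) * nrm2 (deriv γ u) ^ 2) := by
        rw [hnormal]
        field_simp

lemma neg_one_div_le_deriv_of_isLocalMin_nrm2 {φ : ℝ → ℝ} {γ : ℝ → ℝ × ℝ} {u : ℝ}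
    (hφ : DifferentiableAt ℝ φ (nrm2 (γ u))) (hne : γ u ≠ 0) (hreg : deriv γ u ≠ 0)
    (hγ' : DifferentiableAt ℝ (deriv γ) u) (hψ : psiCurv (fun x ↦ φ (nrm2 x)) γ u = 0)
    (hmin : IsLocalMin (fun x ↦ nrm2 (γ x)) u) :
    -(1 / nrm2 (γ u)) ≤ deriv φ (nrm2 (γ u)) := by
  -- `deriv γ` takes the value `0` where `γ` is not differentiable, so regularity excludes this.
  have hγ : ∀ᶠ x in 𝓝 u, DifferentiableAt ℝ γ x :=
    (hγ'.continuousAt.eventually_ne hreg).mono fun _ ↦ differentiableAt_of_deriv_ne_zero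
  have horth := dot2_deriv_eq_zero_of_isLocalMin_nrm2 hmin hγ.self_of_nhds
  have hsecond := dot2_deriv_self_add_nonneg_of_isLocalMin_nrm2 hmin hγ hγ'
  rw [dot2_deriv_deriv_of_psiCurv_eq_zero hφ hne hreg hγ' hψ horth, ← nrm2_sq] at hsecond
  have hfactor : 0 ≤ nrm2 (deriv γ u) ^ 2 * (1 + nrm2 (γ u) * deriv φ (nrm2 (γ u))) := by
    linarith
  have hnonneg := nonneg_of_mul_nonneg_right hfactor (pow_pos (nrm2_pos hreg) 2)
  rw [← neg_div, div_le_iff₀ (nrm2_pos hne)]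
  linarith

lemma exists_forall_nrm2_le_of_periodic {γ : ℝ → ℝ × ℝ} {T : ℝ} (hT : T ≠ 0)
    (hper : Function.Periodic γ T) (hγ : Continuous γ) : ∃ u, ∀ x, nrm2 (γ u) ≤ nrm2 (γ x) := by
  have hcompact : IsCompact (range fun x ↦ nrm2 (γ x)) :=
    (hper.comp nrm2).compact_of_continuous hT (continuous_nrm2.comp hγ)
  obtain ⟨_, ⟨u, rfl⟩, hu⟩ := hcompact.exists_isLeast (range_nonempty _)
  exact ⟨u, fun x ↦ hu (mem_range_self x)⟩

theorem psiMinimal_min_radius_general (φ : ℝ → ℝ) :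
    (∀ (γ : ℝ → ℝ × ℝ) (u : ℝ), DifferentiableAt ℝ φ (nrm2 (γ u)) → γ u ≠ 0 →
      deriv γ u ≠ 0 → DifferentiableAt ℝ (deriv γ) u →
      psiCurv (fun x ↦ φ (nrm2 x)) γ u = 0 → IsLocalMin (fun x ↦ nrm2 (γ x)) u →
      -(1 / nrm2 (γ u)) ≤ deriv φ (nrm2 (γ u)))
    ∧ (∀ ρ₀ : ℝ, 0 < ρ₀ → (∀ r : ℝ, ρ₀ ≤ r → deriv φ r < -(1 / r)) →
        ¬ ∃ (γ : ℝ → ℝ × ℝ) (T : ℝ), T ≠ 0 ∧ Function.Periodic γ T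
          ∧ (∀ u, deriv γ u ≠ 0) ∧ Differentiable ℝ (deriv γ)
          ∧ IsPsiMinimal (fun x ↦ φ (nrm2 x)) γ
          ∧ ∀ u, ρ₀ ≤ nrm2 (γ u)) := by
  refine ⟨fun γ u ↦ neg_one_div_le_deriv_of_isLocalMin_nrm2, ?_⟩
  rintro ρ₀ hρ₀ hφ ⟨γ, T, hT, hper, hreg, hγ', hψ, hfar⟩
  have hγ : Differentiable ℝ γ := fun x ↦ differentiableAt_of_deriv_ne_zero (hreg x)
  obtain ⟨u, hu⟩ := exists_forall_nrm2_le_of_periodic hT hper hγ.continuous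
  have hpos : 0 < nrm2 (γ u) := hρ₀.trans_le (hfar u)
  have hlt : deriv φ (nrm2 (γ u)) < -(1 / nrm2 (γ u)) := hφ _ (hfar u)
  have hφ' : DifferentiableAt ℝ φ (nrm2 (γ u)) :=
    differentiableAt_of_deriv_ne_zero (hlt.trans (neg_neg_of_pos (one_div_pos.2 hpos))).ne
  have hne : γ u ≠ 0 := fun h ↦ hpos.ne' (by simp [h, nrm2])
  exact hlt.not_ge <|
    neg_one_div_le_deriv_of_isLocalMin_nrm2 hφ' hne (hreg u) (hγ' u) (hψ u) (.of_forall hu)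

lemma IsClosedCurve.differentiable_deriv {γ : ℝ → ℝ × ℝ} (hγ : IsClosedCurve γ) :
    Differentiable ℝ (deriv γ) :=
  (contDiff_infty_iff_deriv.1 hγ.smooth).2.differentiable (by simp)

/-- at the minimal distance ρ from the origin of a closed
ψ-minimal curve (ψ radial) one has φ'(ρ) ≥ −1/ρ; hence no closed ψ-minimal
curve lies in the region |x| ≥ ρ₀ where φ'(r) < −1/r. -/
theorem psiMinimal_min_radius
    (φ : ℝ → ℝ) (hφ : ContDiffOn ℝ (⊤ : ℕ∞) φ (Set.Ioi 0)) :
    (∀ (γ : ℝ → ℝ × ℝ) (ρ : ℝ), IsClosedCurve γ → (∀ u, γ u ≠ 0) →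
      IsPsiMinimal (fun x => φ (nrm2 x)) γ →
      0 < ρ → (∀ u, ρ ≤ nrm2 (γ u)) → (∃ u, nrm2 (γ u) = ρ) →
      -(1 / ρ) ≤ deriv φ ρ)
    ∧ (∀ ρ₀ : ℝ, 0 < ρ₀ → (∀ r : ℝ, ρ₀ ≤ r → deriv φ r < -(1 / r)) →
        ¬ ∃ γ : ℝ → ℝ × ℝ, IsClosedCurve γ
          ∧ IsPsiMinimal (fun x => φ (nrm2 x)) γ
          ∧ ∀ u, ρ₀ ≤ nrm2 (γ u)) := by
  obtain ⟨hlocal, hexcluded⟩ := psiMinimal_min_radius_general φ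
  constructor
  · rintro γ _ hγ hne hψ hρ hmin ⟨u, rfl⟩
    exact hlocal γ u ((hφ.contDiffAt (Ioi_mem_nhds hρ)).differentiableAt (by simp)) (hne u)
      (hγ.regular u) (hγ.differentiable_deriv u) (hψ u) (.of_forall hmin)
  · rintro ρ₀ hρ₀ hlt ⟨γ, hγ, hψ, hfar⟩
    exact hexcluded ρ₀ hρ₀ hlt ⟨γ, 2 * π, two_pi_pos.ne', hγ.periodic, hγ.regular,
      hγ.differentiable_deriv, hψ, hfar⟩
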